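/- arXiv:1012.3422 — 9 statements merged into one kernel-verified Lean document; each statement's English description precedes it below -/
import Mathlib

section
/- Let L be a first-order language and let T be any set of L-sentences (of arbitrary cardinality). Then T is independently axiomatizable: there exists a set T' of L-sentences such that (1) an L-structure is a model of T' if and only if it is a model of T, and (2) T' is independent, i.e. for every sentence φ ∈ T' there is a model of T' \ {φ} that is not a model of φ. -/
/-!
The argument separates a combinatorial criterion from the construction of the models it needs.

**Criterion** (`independent_of_family`). Suppose `T` is infinite, and there are at least `|T|` many
structures `N i`, none a model of `T`, such that each `φ ∈ T` fails in only finitely many `N i`.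
As the failure sets are finite, passing to representatives up to elementary equivalence does not
lower the number of structures, so they may be taken to be pairwise not elementarily equivalent.
For every `i` there is then a consequence `ψ i` of `T` that fails in `N i` and in no other `N j`.
Enumerate `T` as `f i`; the sentences `(f i ∨ ⋁ {¬ ψ j | N j ⊭ f i}) ∧ ψ i` axiomatize `T`, and the
`i`-th one fails in `N i` while all others hold there.

**Construction.** Let `T` have least cardinality `κ` among its axiomatizations. If `κ` is finite,
`T` itself is independent; if `κ = ℵ₀`, take `N n` to be a model of the first `n` axioms but
not of `T`. Let `κ` be uncountable. By Zorn's lemma there is a maximal disjoint family of sets `d`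
of symbols such that the axioms not mentioning `d` fail to axiomatize `T`; choose `N d` accordingly.
An axiom has finitely many symbols, so it meets finitely many `d`. It remains to see that the family
has at least `κ` members. Otherwise, close the set of symbols in its union to a subset `T₀ ⊆ T` with
`|T₀| < κ` that reflects every finite subset of `T` up to renaming of symbols over finitely many
fixed symbols (`exists_closed`). Some `φ ∈ T` does not follow from `T₀`. Let `d` be the set of
symbols of `φ` not in `T₀` or the family. If the axioms avoiding `d` entailed `φ`,
finitely many would; renaming their symbols into `T₀`, which does not disturb `φ`, would give
`T₀ ⊨ φ` (`models_of_code_eq`). So `d` contradicts maximality. The renaming takes the place of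
Craig interpolation.
-/

open FirstOrder Language

universe u v

/-- The structure `(M, S)` satisfies every sentence in the set `T`. -/
def IsModelOfSet {L : FirstOrder.Language.{u, v}} (M : Type (max u v)) (S : L.Structure M)
    (T : Set L.Sentence) : Prop :=
  ∀ φ ∈ T, @FirstOrder.Language.Sentence.Realize L M S φ

/-- A set of sentences `T` is independent if no sentence `φ ∈ T` is a semantic
consequence of `T \ {φ}`: some model of `T \ {φ}` fails to satisfy `φ`. -/
def IndependentTheory {L : FirstOrder.Language.{u, v}} (T : Set L.Sentence) : Prop :=
  ∀ φ ∈ T, ∃ (M : Type (max u v)) (S : L.Structure M), Nonempty M ∧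
    IsModelOfSet M S (T \ {φ}) ∧ ¬ @FirstOrder.Language.Sentence.Realize L M S φ

namespace Reznikoff

open FirstOrder Language Cardinal Set

/-- Nonempty `L`-structures in the universe of the theorem, as models of the empty theory. -/
abbrev World (L : FirstOrder.Language.{u, v}) := Theory.ModelType.{u, v, max u v} (∅ : L.Theory)

theorem exists_world_of_not_models {L : FirstOrder.Language.{u, v}} {T : L.Theory}
    {φ : L.Sentence} (h : ¬ T ⊨ᵇ φ) :
    ∃ N : World L, (∀ ψ ∈ T, N ⊨ ψ) ∧ ¬ N ⊨ φ := by
  rw [Theory.models_sentence_iff] at h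
  push Not at h
  obtain ⟨M, hM⟩ := h
  exact ⟨Theory.ModelType.of ∅ M, fun ψ hψ =>
    Theory.realize_sentence_of_mem (M := M) T hψ, hM⟩

theorem models_iff_world {L : FirstOrder.Language.{u, v}} {T : L.Theory}
    {φ : L.Sentence} : T ⊨ᵇ φ ↔ ∀ N : World L, (∀ ψ ∈ T, N ⊨ ψ) → N ⊨ φ := by
  constructor
  · intro h N hN
    have : N ⊨ T := (Theory.model_iff T).2 hN
    exact h.realize_sentence N
  · intro h
    by_contra h'
    obtain ⟨N, h1, h2⟩ := exists_world_of_not_models h'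
    exact h2 (h N h1)

/-! ### From a family of models to an independent axiomatization -/

theorem exists_disjunction {L : FirstOrder.Language.{u, v}} {ι : Type*} {F : Set ι}
    (hF : F.Finite) (ρ : ι → L.Sentence) :
    ∃ σ : L.Sentence, ∀ N : World L, N ⊨ σ ↔ ∃ j ∈ F, N ⊨ ρ j := by
  have := hF.to_subtype
  refine ⟨Formula.iSup (fun j : F => ρ j), fun N => ?_⟩
  simp [Sentence.Realize, Formula.realize_iSup]

/-- `T` has an independent axiomatization, with equivalence and independence tested on
`World L`. -/
def HasIndep {L : FirstOrder.Language.{u, v}} (T : L.Theory) : Prop :=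
  ∃ T' : L.Theory, (∀ N : World L, (∀ φ ∈ T', N ⊨ φ) ↔ ∀ φ ∈ T, N ⊨ φ) ∧
    ∀ φ ∈ T', ∃ N : World L, (∀ ψ ∈ T', ψ ≠ φ → N ⊨ ψ) ∧ ¬ N ⊨ φ

theorem independent_of_separated_family {L : FirstOrder.Language.{u, v}} {ι : Type*}
    (f : ι → L.Sentence) (N : ι → World L)
    (hsep : ∀ i j, i ≠ j → ∃ σ : L.Sentence, ¬ N i ⊨ σ ∧ N j ⊨ σ)
    (hN : ∀ i, ∃ k, ¬ N i ⊨ f k)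
    (hfin : ∀ k, {i | ¬ N i ⊨ f k}.Finite) : HasIndep (range f) := by
  have hψ : ∀ i, ∃ ψ : L.Sentence, (∀ M : World L, (∀ k, M ⊨ f k) → M ⊨ ψ) ∧
      ¬ N i ⊨ ψ ∧ ∀ j, j ≠ i → N j ⊨ ψ := by
    intro i
    obtain ⟨k, hk⟩ := hN i
    have : ∀ j, ∃ σ : L.Sentence, ¬ N i ⊨ σ ∧ (j ≠ i → N j ⊨ σ) := by
      intro j
      by_cases h : j = i
      · exact ⟨f k, hk, fun h' => absurd h h'⟩
      · obtain ⟨σ, h1, h2⟩ := hsep i j (Ne.symm h)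
        exact ⟨σ, h1, fun _ => h2⟩
    choose ρ hρ hρ' using this
    obtain ⟨σ, hσ⟩ := exists_disjunction (hfin k) ρ
    refine ⟨f k ⊔ σ, fun M hM => Formula.realize_sup.2 (Or.inl (hM k)), fun h => ?_,
      fun j hj => ?_⟩
    · rcases Formula.realize_sup.1 h with h | h
      · exact hk h
      · obtain ⟨j, -, hj⟩ := (hσ _).1 h
        exact hρ j hj
    · by_cases hjk : N j ⊨ f k
      · exact Formula.realize_sup.2 (Or.inl hjk)
      · exact Formula.realize_sup.2 (Or.inr ((hσ _).2 ⟨j, hjk, hρ' j hj⟩))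
  choose ψ hTψ hψi hψj using hψ
  have hχ : ∀ i, ∃ χ : L.Sentence, ∀ M : World L,
      M ⊨ χ ↔ (M ⊨ f i ∨ ∃ j, ¬ N j ⊨ f i ∧ ¬ M ⊨ ψ j) ∧ M ⊨ ψ i := by
    intro i
    obtain ⟨σ, hσ⟩ := exists_disjunction (hfin i) (fun j => (ψ j).not)
    refine ⟨(f i ⊔ σ) ⊓ ψ i, fun M => ?_⟩
    have h1 := hσ M
    simp only [Sentence.Realize] at h1 ⊢
    rw [Formula.realize_inf, Formula.realize_sup, h1]
    simp [Formula.realize_not]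
  choose χ hχ using hχ
  refine ⟨range χ, fun M => ?_, ?_⟩
  · simp only [forall_mem_range, hχ]
    constructor
    · intro h i
      rcases (h i).1 with h1 | ⟨j, -, h1⟩
      · exact h1
      · exact absurd (h j).2 h1
    · exact fun h i => ⟨Or.inl (h i), hTψ i M h⟩
  · rintro _ ⟨i, rfl⟩
    refine ⟨N i, ?_, fun h => hψi i ((hχ i _).1 h).2⟩
    rintro _ ⟨j, rfl⟩ hji
    have hij : i ≠ j := fun h => hji (h ▸ rfl)
    refine (hχ j _).2 ⟨?_, hψj j i hij⟩
    by_cases h : N i ⊨ f j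
    · exact Or.inl h
    · exact Or.inr ⟨i, h, hψi i⟩

/-- The index type is thinned out to representatives up to elementary equivalence. Each
equivalence class is finite, being contained in the failure set of some `φ ∈ T`, so an infinite
number of indices stays the same. -/
theorem independent_of_family {L : FirstOrder.Language.{u, v}} {T : L.Theory}
    {ι : Type (max u v)} [Infinite ι] (N : ι → World L)
    (hN : ∀ i, ∃ φ ∈ T, ¬ N i ⊨ φ)
    (hfin : ∀ φ ∈ T, {i | ¬ N i ⊨ φ}.Finite) (hcard : #T ≤ #ι) : HasIndep T := by
  let th : ι → L.Theory := fun i => L.completeTheory (N i)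
  have hth : ∀ i (φ : L.Sentence), φ ∈ th i ↔ N i ⊨ φ := fun i φ => Iff.rfl
  have hfib : ∀ i, {j | th j = th i}.Finite := by
    intro i
    obtain ⟨φ, hφ, h⟩ := hN i
    refine (hfin φ hφ).subset fun j hj => ?_
    rw [← hth, ← (show th j = th i from hj), hth] at h
    exact h
  let R := range th
  have hle : #ι ≤ #R * ℵ₀ := by
    refine mk_le_mk_mul_of_mk_preimage_le (rangeFactorization th) ?_
    rintro ⟨_, i, rfl⟩
    refine ((hfib i).subset ?_).countable.le_aleph0
    intro j hj
    exact congrArg Subtype.val hj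
  have hR : ℵ₀ ≤ #R := by
    by_contra hlt
    have hf : Finite R := lt_aleph0_iff_finite.1 (not_le.1 hlt)
    have : Finite ι := by
      refine finite_univ_iff.1 (Finite.of_finite_fibers (rangeFactorization th) (toFinite _) ?_)
      rintro ⟨_, i, rfl⟩ -
      exact (hfib i).subset fun j hj => congrArg Subtype.val hj.2
    exact not_finite ι
  have hTR : #T ≤ #R := by
    rw [mul_eq_left hR hR aleph0_ne_zero] at hle
    exact hcard.trans hle
  have hTne : Nonempty T := by
    obtain ⟨i⟩ : Nonempty ι := inferInstance
    obtain ⟨φ, hφ, -⟩ := hN i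
    exact ⟨⟨φ, hφ⟩⟩
  obtain ⟨g⟩ := hTR
  let f : R → L.Sentence := fun r => (Function.invFun g r : T)
  have hf : range f = T := by
    ext φ
    constructor
    · rintro ⟨r, rfl⟩
      exact (Function.invFun g r).2
    · intro hφ
      exact ⟨g ⟨φ, hφ⟩, by simp [f, Function.leftInverse_invFun g.injective _]⟩
  choose rep hrep using fun r : R => r.2
  rw [← hf]
  refine independent_of_separated_family f (fun r => N (rep r)) ?_ ?_ ?_
  · intro r s hrs
    by_contra hcon
    push Not at hcon
    apply hrs
    apply Subtype.ext
    rw [← hrep r, ← hrep s]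
    ext σ
    rw [hth, hth]
    constructor
    · intro h
      by_contra h'
      have := hcon σ.not (by simpa [Sentence.realize_not] using h)
      exact this (by simpa [Sentence.realize_not] using h')
    · intro h
      by_contra h'
      exact hcon σ h' h
  · intro r
    obtain ⟨φ, hφ, h⟩ := hN (rep r)
    rw [← hf] at hφ
    obtain ⟨k, rfl⟩ := hφ
    exact ⟨k, h⟩
  · intro k
    have hk : f k ∈ T := hf ▸ mem_range_self k
    refine Finite.preimage (f := rep) ?_ (hfin _ hk)
    intro r _ s _ hrs
    exact Subtype.ext (by rw [← hrep r, ← hrep s, hrs])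

/-! ### Finite supports -/

/-- Two structures on the same carrier interpret every symbol in `A` in the same way. -/
def Agree {L : FirstOrder.Language.{u, v}} {M : Type (max u v)} (A : Set L.Symbols)
    (S₁ S₂ : L.Structure M) : Prop :=
  (∀ n (f : L.Functions n), Sum.inl ⟨n, f⟩ ∈ A → @Structure.funMap L M S₁ n f = S₂.funMap f) ∧
  (∀ n (r : L.Relations n), Sum.inr ⟨n, r⟩ ∈ A → @Structure.RelMap L M S₁ n r = S₂.RelMap r)

theorem Agree.mono {L : FirstOrder.Language.{u, v}} {M : Type (max u v)} {A B : Set L.Symbols}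
    {S₁ S₂ : L.Structure M} (h : Agree B S₁ S₂) (hAB : A ⊆ B) : Agree A S₁ S₂ :=
  ⟨fun n f hf => h.1 n f (hAB hf), fun n r hr => h.2 n r (hAB hr)⟩

theorem exists_support_term {L : FirstOrder.Language.{u, v}} {α : Type} (t : L.Term α) :
    ∃ A : Set L.Symbols, A.Finite ∧ ∀ (M : Type (max u v)) (S₁ S₂ : L.Structure M),
      Agree A S₁ S₂ → ∀ x : α → M, @Term.realize L M S₁ α x t = @Term.realize L M S₂ α x t := by
  induction t with
  | var a => exact ⟨∅, finite_empty, fun M S₁ S₂ _ x => rfl⟩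
  | @func n f ts ih =>
    choose A hA h using ih
    refine ⟨{Sum.inl ⟨n, f⟩} ∪ ⋃ i, A i, (finite_singleton _).union (finite_iUnion hA), ?_⟩
    intro M S₁ S₂ hag x
    simp only [Term.realize]
    rw [hag.1 n f (Or.inl rfl)]
    congr 1
    funext i
    exact h i M S₁ S₂ (hag.mono (subset_union_of_subset_right (subset_iUnion A i) _)) x

theorem exists_support_formula {L : FirstOrder.Language.{u, v}} {α : Type} {n : ℕ}
    (φ : L.BoundedFormula α n) :
    ∃ A : Set L.Symbols, A.Finite ∧ ∀ (M : Type (max u v)) (S₁ S₂ : L.Structure M),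
      Agree A S₁ S₂ → ∀ (x : α → M) (y : Fin n → M),
        @BoundedFormula.Realize L M S₁ α n φ x y ↔ @BoundedFormula.Realize L M S₂ α n φ x y := by
  induction φ with
  | falsum => exact ⟨∅, finite_empty, fun M S₁ S₂ _ x y => Iff.rfl⟩
  | equal t₁ t₂ =>
    obtain ⟨A, hA, h⟩ := exists_support_term t₁
    obtain ⟨B, hB, h'⟩ := exists_support_term t₂
    refine ⟨A ∪ B, hA.union hB, fun M S₁ S₂ hag x y => ?_⟩
    simp only [BoundedFormula.Realize]
    rw [h M S₁ S₂ (hag.mono subset_union_left), h' M S₁ S₂ (hag.mono subset_union_right)]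
  | @rel n k r ts =>
    choose A hA h using fun i => exists_support_term (ts i)
    refine ⟨{Sum.inr ⟨k, r⟩} ∪ ⋃ i, A i, (finite_singleton _).union (finite_iUnion hA), ?_⟩
    intro M S₁ S₂ hag x y
    simp only [BoundedFormula.Realize]
    rw [hag.2 k r (Or.inl rfl)]
    have : ∀ i, @Term.realize L M S₁ _ (Sum.elim x y) (ts i)
        = @Term.realize L M S₂ _ (Sum.elim x y) (ts i) := fun i =>
      h i M S₁ S₂ (hag.mono (subset_union_of_subset_right (subset_iUnion A i) _)) _
    simp only [this]
  | imp φ₁ φ₂ ih₁ ih₂ =>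
    obtain ⟨A, hA, h⟩ := ih₁
    obtain ⟨B, hB, h'⟩ := ih₂
    refine ⟨A ∪ B, hA.union hB, fun M S₁ S₂ hag x y => ?_⟩
    simp only [BoundedFormula.Realize]
    rw [h M S₁ S₂ (hag.mono subset_union_left), h' M S₁ S₂ (hag.mono subset_union_right)]
  | all φ ih =>
    obtain ⟨A, hA, h⟩ := ih
    refine ⟨A, hA, fun M S₁ S₂ hag x y => ?_⟩
    simp only [BoundedFormula.Realize]
    exact forall_congr' fun a => h M S₁ S₂ hag _ _

theorem exists_support {L : FirstOrder.Language.{u, v}} (φ : L.Sentence) :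
    ∃ A : Set L.Symbols, A.Finite ∧ ∀ (M : Type (max u v)) (S₁ S₂ : L.Structure M),
      Agree A S₁ S₂ → (@Sentence.Realize L M S₁ φ ↔ @Sentence.Realize L M S₂ φ) := by
  obtain ⟨A, hA, h⟩ := exists_support_formula φ
  exact ⟨A, hA, fun M S₁ S₂ hag => h M S₁ S₂ hag _ _⟩

/-- A finite set of symbols that determines the truth of `φ`. The choice is semantic: it need not
be the set of symbols occurring in `φ`. -/
noncomputable def supp {L : FirstOrder.Language.{u, v}} (φ : L.Sentence) : Set L.Symbols :=
  (exists_support φ).choose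

theorem supp_finite {L : FirstOrder.Language.{u, v}} (φ : L.Sentence) : (supp φ).Finite :=
  (exists_support φ).choose_spec.1

theorem realize_iff_of_agree {L : FirstOrder.Language.{u, v}} {φ : L.Sentence}
    {M : Type (max u v)} {S₁ S₂ : L.Structure M} (h : Agree (supp φ) S₁ S₂) :
    @Sentence.Realize L M S₁ φ ↔ @Sentence.Realize L M S₂ φ :=
  (exists_support φ).choose_spec.2 M S₁ S₂ h

/-- The union of the supports of the sentences in `F`. -/
def suppSet {L : FirstOrder.Language.{u, v}} (F : L.Theory) : Set L.Symbols :=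
  ⋃ φ ∈ F, supp φ

theorem suppSet_finite {L : FirstOrder.Language.{u, v}} {F : L.Theory} (hF : F.Finite) :
    (suppSet F).Finite :=
  hF.biUnion fun φ _ => supp_finite φ

theorem supp_subset_suppSet {L : FirstOrder.Language.{u, v}} {F : L.Theory} {φ : L.Sentence}
    (h : φ ∈ F) : supp φ ⊆ suppSet F :=
  subset_biUnion_of_mem (u := fun φ => supp φ) h

/-! ### Renaming symbols into a countable language -/

/-- A countable language with function and relation symbols `0, 1, 2, …` in every arity. -/
def codeLang : FirstOrder.Language.{0, 0} := ⟨fun _ => ℕ, fun _ => ℕ⟩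

instance : Countable codeLang.Symbols := by
  unfold codeLang Language.Symbols
  infer_instance

instance : Countable codeLang.Sentence :=
  inferInstanceAs (Countable (codeLang.Formula Empty))

/-- The renaming of symbols given by a labelling by natural numbers. -/
def labelHom {L : FirstOrder.Language.{u, v}} (r : L.Symbols → ℕ) : L →ᴸ codeLang where
  onFunction := fun n f => r (Sum.inl ⟨n, f⟩)
  onRelation := fun n R => r (Sum.inr ⟨n, R⟩)

theorem exists_label {α : Type*} (A : Set α) : ∃ f : α → ℕ, A.Finite → InjOn f A := by
  by_cases h : A.Finite
  · obtain ⟨f, hf⟩ := countable_iff_exists_injOn.1 h.countable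
    exact ⟨f, fun _ => hf⟩
  · exact ⟨fun _ => 0, fun hno => absurd hno h⟩

/-- A labelling by natural numbers, injective on `A` if `A` is finite. -/
noncomputable def enc {α : Type*} (A : Set α) : α → ℕ := (exists_label A).choose

theorem enc_injOn {α : Type*} {A : Set α} (hA : A.Finite) : InjOn (enc A) A :=
  (exists_label A).choose_spec hA

open Classical in
/-- A labelling that is injective on `s ∪ A` (for finite `s`, `A`) and whose restriction to `s`
does not depend on `A`. -/
noncomputable def lab {α : Type*} (s A : Set α) (x : α) : ℕ :=
  if x ∈ s then 2 * enc s x else 2 * enc A x + 1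

theorem lab_of_mem {α : Type*} {s A : Set α} {x : α} (h : x ∈ s) : lab s A x = 2 * enc s x :=
  if_pos h

theorem lab_injOn {α : Type*} {s A : Set α} (hs : s.Finite) (hA : A.Finite) :
    InjOn (lab s A) (s ∪ A) := by
  intro x hx y hy hxy
  unfold lab at hxy
  split_ifs at hxy with h1 h2 h2
  · exact enc_injOn hs h1 h2 (by omega)
  · omega
  · omega
  · exact enc_injOn hA (hx.resolve_left h1) (hy.resolve_left h2) (by omega)

/-- The isomorphism type of the set `F` of sentences over the symbols in `s`: the symbols
of `s` receive fixed labels, those of `F` outside `s` arbitrary other ones. -/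
noncomputable def code {L : FirstOrder.Language.{u, v}} (s : Set L.Symbols) (F : L.Theory) :
    Set codeLang.Sentence :=
  Set.image (labelHom (lab s (suppSet F))).onSentence F

/-- The pullback of a `codeLang`-structure along a labelling. -/
abbrev pull {L : FirstOrder.Language.{u, v}} {M : Type (max u v)} (r : L.Symbols → ℕ)
    (C : codeLang.Structure M) : L.Structure M where
  funMap := fun {n} f => C.funMap (n := n) (r (Sum.inl ⟨n, f⟩))
  RelMap := fun {n} R => C.RelMap (n := n) (r (Sum.inr ⟨n, R⟩))

theorem realize_pull {L : FirstOrder.Language.{u, v}} {M : Type (max u v)} (r : L.Symbols → ℕ)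
    (C : codeLang.Structure M) (φ : L.Sentence) :
    @Sentence.Realize codeLang M C ((labelHom r).onSentence φ) ↔
      @Sentence.Realize L M (pull r C) φ := by
  let := pull r C
  have : (labelHom r).IsExpansionOn M := ⟨fun _ _ => rfl, fun _ _ => rfl⟩
  exact LHom.realize_onSentence M (labelHom r) φ

open Classical in
/-- Transport of an `L`-structure along a labelling injective on `A`. Labels not coming from `A`
get a default interpretation. -/
theorem exists_push {L : FirstOrder.Language.{u, v}} {M : Type (max u v)} [Nonempty M]
    (r : L.Symbols → ℕ) {A : Set L.Symbols} (hr : InjOn r A) (S : L.Structure M) :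
    ∃ C : codeLang.Structure M, Agree A (pull r C) S := by
  let C : codeLang.Structure M :=
    { funMap := fun {n} (k : ℕ) x =>
        if h : ∃ f : L.Functions n, Sum.inl ⟨n, f⟩ ∈ A ∧ r (Sum.inl ⟨n, f⟩) = k then
          S.funMap h.choose x else Classical.arbitrary M
      RelMap := fun {n} (k : ℕ) x =>
        if h : ∃ R : L.Relations n, Sum.inr ⟨n, R⟩ ∈ A ∧ r (Sum.inr ⟨n, R⟩) = k then
          S.RelMap h.choose x else False }
  refine ⟨C, ?_, ?_⟩
  · intro n f hf
    have h : ∃ f' : L.Functions n, Sum.inl ⟨n, f'⟩ ∈ A ∧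
      r (Sum.inl ⟨n, f'⟩) = r (Sum.inl ⟨n, f⟩) := ⟨f, hf, rfl⟩
    have hc : h.choose = f := by
      have := hr h.choose_spec.1 hf h.choose_spec.2
      simpa using this
    funext x
    change (if h : ∃ f' : L.Functions n, Sum.inl ⟨n, f'⟩ ∈ A ∧
      r (Sum.inl ⟨n, f'⟩) = r (Sum.inl ⟨n, f⟩) then
          S.funMap h.choose x else Classical.arbitrary M) = _
    rw [dif_pos h, hc]
  · intro n R hR
    have h : ∃ R' : L.Relations n, Sum.inr ⟨n, R'⟩ ∈ A ∧
      r (Sum.inr ⟨n, R'⟩) = r (Sum.inr ⟨n, R⟩) := ⟨R, hR, rfl⟩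
    have hc : h.choose = R := by
      have := hr h.choose_spec.1 hR h.choose_spec.2
      simpa using this
    funext x
    change (if h : ∃ R' : L.Relations n, Sum.inr ⟨n, R'⟩ ∈ A ∧
      r (Sum.inr ⟨n, R'⟩) = r (Sum.inr ⟨n, R⟩) then
          S.RelMap h.choose x else False) = _
    rw [dif_pos h, hc]

open Classical in
theorem exists_patch {L : FirstOrder.Language.{u, v}} {M : Type (max u v)}
    (A : Set L.Symbols) (S₁ S₂ : L.Structure M) :
    ∃ S : L.Structure M, Agree A S S₁ ∧ Agree Aᶜ S S₂ := by
  let S : L.Structure M :=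
    { funMap := fun {n} f =>
        if Sum.inl ⟨n, f⟩ ∈ A then S₁.funMap f else S₂.funMap f
      RelMap := fun {n} R =>
        if Sum.inr ⟨n, R⟩ ∈ A then S₁.RelMap R else S₂.RelMap R }
  exact ⟨S, ⟨fun n f hf => if_pos hf, fun n f hf => if_pos hf⟩,
    ⟨fun n f hf => if_neg hf, fun n f hf => if_neg hf⟩⟩

/-- Entailment is invariant under renaming of the symbols of the premises over `s`, as long as
`s` contains all symbols they share with the conclusion. The symbols of the renamed
premises `F'` may clash with those of `φ`: this only identifies symbols. -/
theorem models_of_code_eq {L : FirstOrder.Language.{u, v}} {s : Set L.Symbols} {F F' : L.Theory}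
    {φ : L.Sentence} (hs : s.Finite) (hF' : F'.Finite)
    (hcode : code s F' = code s F) (hφ : supp φ ∩ suppSet F ⊆ s) (h : F ⊨ᵇ φ) : F' ⊨ᵇ φ := by
  rw [models_iff_world] at h ⊢
  intro N hN
  obtain ⟨C, hC⟩ := exists_push (M := N) _ (lab_injOn hs (suppSet_finite hF')) N.struc
  have hC1 : ∀ χ ∈ code s F', @Sentence.Realize codeLang N C χ := by
    rintro _ ⟨ψ, hψ, rfl⟩
    rw [realize_pull, realize_iff_of_agree
      (hC.mono ((supp_subset_suppSet hψ).trans subset_union_right))]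
    exact hN ψ hψ
  rw [hcode] at hC1
  -- `F` is interpreted through the common code, and the remaining symbols as in `N`.
  obtain ⟨S, hS1, hS2⟩ := exists_patch (suppSet F) (pull (lab s (suppSet F)) C) N.struc
  have hSF : ∀ ψ ∈ F, @Sentence.Realize L N S ψ := by
    intro ψ hψ
    rw [realize_iff_of_agree (hS1.mono (supp_subset_suppSet hψ)), ← realize_pull]
    exact hC1 _ ⟨ψ, hψ, rfl⟩
  have hSφ : @Sentence.Realize L N S φ := by
    let := S
    exact h (@Theory.ModelType.of L ∅ N S (Theory.model_iff _ |>.2 (by simp)) _) hSF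
  refine (realize_iff_of_agree ?_).1 hSφ
  constructor
  · intro n f hf
    by_cases hfF : Sum.inl ⟨n, f⟩ ∈ suppSet F
    · have hfs := hφ ⟨hf, hfF⟩
      rw [hS1.1 n f hfF, ← hC.1 n f (Or.inl hfs)]
      exact congrArg (fun k : ℕ => C.funMap (n := n) k)
        ((lab_of_mem hfs).trans (lab_of_mem hfs).symm)
    · exact hS2.1 n f hfF
  · intro n f hf
    by_cases hfF : Sum.inr ⟨n, f⟩ ∈ suppSet F
    · have hfs := hφ ⟨hf, hfF⟩
      rw [hS1.2 n f hfF, ← hC.2 n f (Or.inl hfs)]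
      exact congrArg (fun k : ℕ => C.RelMap (n := n) k)
        ((lab_of_mem hfs).trans (lab_of_mem hfs).symm)
    · exact hS2.2 n f hfF

/-! ### Small reflecting subtheories -/

/-- Choice of a finite subset of `T` with code `c` over `s`, where there is one. -/
theorem exists_reflection {L : FirstOrder.Language.{u, v}} (T : L.Theory) (s : Set L.Symbols)
    (c : Set codeLang.Sentence) : ∃ F : L.Theory, F ⊆ T ∧ F.Finite ∧
      ((∃ F' ⊆ T, F'.Finite ∧ code s F' = c) → code s F = c) := by
  by_cases h : ∃ F' ⊆ T, F'.Finite ∧ code s F' = c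
  · obtain ⟨F, h1, h2, h3⟩ := h
    exact ⟨F, h1, h2, fun _ => h3⟩
  · exact ⟨∅, empty_subset _, finite_empty, fun hno => absurd hno h⟩

theorem mk_biUnion_le_of_le {α β : Type u} {s : Set α} {A : α → Set β}
    {c : Cardinal.{u}} (hc : ℵ₀ ≤ c) (hs : #s ≤ c) (hA : ∀ x ∈ s, #(A x) ≤ c) :
    #(⋃ x ∈ s, A x : Set β) ≤ c := by
  refine (mk_biUnion_le A s).trans ?_
  refine (mul_le_mul' hs (ciSup_le' (a := c) fun x : s => hA x.1 x.2)).trans ?_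
  rw [mul_eq_self hc]

theorem mk_finite_subsets_le {α : Type u} {S : Set α} {c : Cardinal.{u}}
    (hc : ℵ₀ ≤ c) (hS : #S ≤ c) : #{s : Set α | s.Finite ∧ s ⊆ S} ≤ c := by
  have h1 : #{s : Set α | s.Finite ∧ s ⊆ S} ≤ #(List S) := by
    refine mk_le_of_surjective (f := fun l : List S =>
      (⟨(↑) '' {x : S | x ∈ l}, (List.finite_toSet l).image _,
        by rintro _ ⟨x, -, rfl⟩; exact x.2⟩ : {s : Set α | s.Finite ∧ s ⊆ S})) ?_
    rintro ⟨s, hs, hsS⟩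
    have hfin : {x : S | (x : α) ∈ s}.Finite := hs.preimage Subtype.val_injective.injOn
    refine ⟨hfin.toFinset.toList, Subtype.ext ?_⟩
    ext x
    simp only [Finset.mem_toList, Finite.mem_toFinset, mem_ofPred_eq, mem_image, Subtype.exists,
      exists_and_left, exists_prop, exists_eq_right_right]
    exact ⟨fun h => h.1, fun h => ⟨h, hsS h⟩⟩
  refine h1.trans ((mk_list_le_max _).trans (max_le hc hS))

/-- A small set of symbols `S₀` extends to a set `S₀ ∪ suppSet T₀`, with `T₀ ⊆ T` small, over
which every finite subset of `T` has a copy inside `T₀`. It is the closure of `S₀` under a choice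
of one copy for each of the countably many codes over each finite set of symbols. -/
theorem exists_closed {L : FirstOrder.Language.{u, v}} (T : L.Theory) {S₀ : Set L.Symbols}
    {c : Cardinal.{max u v}} (hc : ℵ₀ ≤ c) (hS₀ : #S₀ ≤ c) :
    ∃ T₀ ⊆ T, #T₀ ≤ c ∧ ∀ s : Set L.Symbols, s.Finite → s ⊆ S₀ ∪ suppSet T₀ →
      ∀ F ⊆ T, F.Finite → ∃ F' ⊆ T₀, F'.Finite ∧ code s F' = code s F := by
  choose P hPT hPfin hP using exists_reflection T
  let K : Set (Set codeLang.Sentence) := {k | k.Finite}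
  have hK : K.Countable := by
    simpa [K] using countable_ofPred_finite_subset (countable_univ (α := codeLang.Sentence))
  let Q : Set L.Symbols → L.Theory := fun s => ⋃ k ∈ K, P s k
  have hQ : ∀ s, (Q s).Countable := fun s => hK.biUnion fun k _ => (hPfin s k).countable
  let step : Set L.Symbols → L.Theory := fun S => ⋃ s ∈ {s : Set L.Symbols | s.Finite ∧ s ⊆ S}, Q s
  have hstep : ∀ S : Set L.Symbols, #S ≤ c → #(step S) ≤ c := fun S hS =>
    mk_biUnion_le_of_le hc (mk_finite_subsets_le hc hS)
      fun s _ => (hQ s).le_aleph0.trans hc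
  let S : ℕ → Set L.Symbols := fun n =>
    Nat.rec (motive := fun _ => Set L.Symbols) S₀ (fun _ A => A ∪ suppSet (step A)) n
  have hSs : ∀ n, S (n + 1) = S n ∪ suppSet (step (S n)) := fun n => rfl
  have hSc : ∀ n, #(S n) ≤ c := by
    intro n
    induction n with
    | zero => exact hS₀
    | succ n ih =>
      rw [hSs]
      refine (mk_union_le _ _).trans (add_le_of_le hc ih ?_)
      exact mk_biUnion_le_of_le hc (hstep _ ih)
        fun φ _ => (supp_finite φ).countable.le_aleph0.trans hc
  have hmono : Monotone S := monotone_nat_of_le_succ fun n => by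
    rw [hSs]; exact subset_union_left
  refine ⟨⋃ n, step (S n), ?_, ?_, ?_⟩
  · simp only [step, Q, iUnion_subset_iff]
    exact fun n s _ k _ => hPT s k
  · have h := mk_iUnion_le_lift (fun n => step (S n))
    rw [lift_id'.{0, max u v}] at h
    refine h.trans ?_
    refine (mul_le_mul' (b := c) (d := c) (by simpa using hc)
      (ciSup_le' fun n => ?_)).trans (mul_eq_self hc).le
    rw [lift_id'.{0, max u v}]
    exact hstep _ (hSc n)
  · intro s hs hsub F hFT hF
    have hsub' : s ⊆ ⋃ n, S n := by
      refine hsub.trans (union_subset (subset_iUnion S 0) ?_)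
      refine iUnion₂_subset fun φ hφ => ?_
      obtain ⟨n, hn⟩ := mem_iUnion.1 hφ
      refine ((supp_subset_suppSet hn).trans ?_).trans (subset_iUnion S (n + 1))
      rw [hSs]
      exact subset_union_right
    obtain ⟨n, hn⟩ : ∃ n, s ⊆ S n :=
      by
      have := hmono.directed_le.exists_mem_subset_of_finset_subset_biUnion (s := hs.toFinset)
        (by simpa using hsub')
      simpa using this
    have hk : code s F ∈ K := hF.image _
    refine ⟨P s (code s F), ?_, hPfin _ _, hP _ _ ⟨F, hFT, hF, rfl⟩⟩
    refine subset_trans ?_ (subset_iUnion _ n)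
    refine subset_trans ?_ (subset_biUnion_of_mem (u := Q) (show s ∈ {s : Set L.Symbols |
      s.Finite ∧ s ⊆ S n} from ⟨hs, hn⟩))
    exact subset_biUnion_of_mem (u := fun k => P s k) hk

/-! ### Theories without smaller axiomatizations -/

/-- No subset of `T` of smaller cardinality axiomatizes `T`. -/
def Tight {L : FirstOrder.Language.{u, v}} (T : L.Theory) : Prop :=
  ∀ T₁ ⊆ T, #T₁ < #T → ∃ φ ∈ T, ¬ T₁ ⊨ᵇ φ

theorem exists_tight {L : FirstOrder.Language.{u, v}} (T : L.Theory) :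
    ∃ T₁ : L.Theory, (∀ N : World L, (∀ φ ∈ T₁, N ⊨ φ) ↔ ∀ φ ∈ T, N ⊨ φ) ∧ Tight T₁ := by
  obtain ⟨T₁, h1, h2⟩ := WellFounded.has_min
    (InvImage.wf (fun T₁ : L.Theory => #T₁) Cardinal.lt_wf)
    {T₁ : L.Theory | ∀ N : World L, (∀ φ ∈ T₁, N ⊨ φ) ↔ ∀ φ ∈ T, N ⊨ φ} ⟨T, fun N => Iff.rfl⟩
  refine ⟨T₁, h1, fun T₂ hsub hlt => ?_⟩
  by_contra hcon
  push Not at hcon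
  refine h2 T₂ (fun N => ?_) hlt
  rw [← h1 N]
  exact ⟨fun h φ hφ => models_iff_world.1 (hcon φ hφ) N h, fun h φ hφ => h φ (hsub hφ)⟩

theorem indep_of_finite {L : FirstOrder.Language.{u, v}} {T : L.Theory} (hT : Tight T)
    (hfin : T.Finite) : HasIndep T := by
  refine ⟨T, fun N => Iff.rfl, fun φ hφ => ?_⟩
  have hlt : #(T \ {φ} : Set _) < #T := by
    have : (T \ {φ}).ncard < T.ncard := ncard_sdiff_singleton_lt_of_mem hφ hfin
    rw [← cast_ncard hfin, ← cast_ncard (hfin.subset sdiff_subset)]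
    exact_mod_cast this
  obtain ⟨χ, hχ, h⟩ := hT (T \ {φ}) sdiff_subset hlt
  have hχφ : χ = φ := by
    by_contra hne
    exact h (Theory.models_sentence_of_mem ⟨hχ, hne⟩)
  subst hχφ
  obtain ⟨N, h1, h2⟩ := exists_world_of_not_models h
  exact ⟨N, fun ψ hψ hne => h1 ψ ⟨hψ, hne⟩, h2⟩

theorem indep_of_countable {L : FirstOrder.Language.{u, v}} {T : L.Theory} (hT : Tight T)
    (hcard : #T = ℵ₀) : HasIndep T := by
  obtain ⟨e⟩ : Nonempty (ℕ ≃ T) := by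
    rw [← lift_mk_eq']
    simp [hcard]
  have : ∀ n : ℕ, ∃ N : World L, (∀ m < n, N ⊨ (e m : L.Sentence)) ∧ ∃ φ ∈ T, ¬ N ⊨ φ := by
    intro n
    have hfin : ((fun m => (e m : L.Sentence)) '' {m | m < n}).Finite := (finite_lt_nat n).image _
    obtain ⟨φ, hφ, h⟩ := hT _ (by rintro _ ⟨m, -, rfl⟩; exact (e m).2)
      ((lt_aleph0_iff_set_finite.2 hfin).trans_eq hcard.symm)
    obtain ⟨N, h1, h2⟩ := exists_world_of_not_models h
    exact ⟨N, fun m hm => h1 _ ⟨m, hm, rfl⟩, φ, hφ, h2⟩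
  choose N hN1 hN2 using this
  refine independent_of_family (ι := ULift.{max u v} ℕ) (fun i => N i.down)
    (fun i => hN2 _) ?_ (by simp [hcard])
  intro φ hφ
  obtain ⟨m, hm⟩ := e.surjective ⟨φ, hφ⟩
  refine Finite.subset ((finite_le_nat m).preimage (ULift.down_injective.injOn)) ?_
  intro i hi
  by_contra hlt
  have := hN1 i.down m (not_le.1 hlt)
  rw [hm] at this
  exact hi this

/-- The axioms in `T` whose support avoids `d`. -/
def avoid {L : FirstOrder.Language.{u, v}} (T : L.Theory) (d : Set L.Symbols) : L.Theory :=
  {φ ∈ T | Disjoint (supp φ) d}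

/-- Finite sets of symbols such that the axioms avoiding them do not axiomatize `T`. -/
def Essential {L : FirstOrder.Language.{u, v}} (T : L.Theory) (d : Set L.Symbols) : Prop :=
  d.Finite ∧ ∃ φ ∈ T, ¬ avoid T d ⊨ᵇ φ

theorem Essential.nonempty {L : FirstOrder.Language.{u, v}} {T : L.Theory} {d : Set L.Symbols}
    (h : Essential T d) : d.Nonempty := by
  rw [nonempty_iff_ne_empty]
  rintro rfl
  obtain ⟨-, φ, hφ, h⟩ := h
  exact h (Theory.models_sentence_of_mem ⟨hφ, disjoint_empty _⟩)

/-- Below the cardinality of a tight uncountable theory, every set of symbols is disjoint from an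
essential one. -/
theorem exists_essential {L : FirstOrder.Language.{u, v}} {T : L.Theory} (hT : Tight T)
    (hcard : ℵ₀ < #T) {S₀ : Set L.Symbols} (hS₀ : #S₀ < #T) :
    ∃ d, Essential T d ∧ Disjoint d S₀ := by
  obtain ⟨T₀, hT₀, hc, hcl⟩ := exists_closed T (le_max_left ℵ₀ #S₀) (le_max_right ℵ₀ #S₀)
  obtain ⟨φ, hφ, hn⟩ := hT T₀ hT₀ (hc.trans_lt (max_lt hcard hS₀))
  refine ⟨supp φ \ (S₀ ∪ suppSet T₀), ⟨(supp_finite φ).subset sdiff_subset, φ, hφ, ?_⟩,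
    disjoint_sdiff_left.mono_right subset_union_left⟩
  intro hav
  obtain ⟨F, hF, hFφ⟩ := Theory.models_iff_finset_models.1 hav
  have hsfin := (supp_finite φ).subset (inter_subset_left (t := S₀ ∪ suppSet T₀))
  obtain ⟨F', hF'T, hF'fin, hcode⟩ := hcl (supp φ ∩ (S₀ ∪ suppSet T₀)) hsfin
    inter_subset_right F (fun ψ hψ => (hF hψ).1) F.finite_toSet
  have hF' : F' ⊨ᵇ φ := by
    refine models_of_code_eq hsfin hF'fin hcode ?_ hFφ
    rintro x ⟨hxφ, hxF⟩
    refine ⟨hxφ, ?_⟩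
    by_contra hx
    obtain ⟨ψ, hψ, hxψ⟩ := mem_iUnion₂.1 hxF
    exact disjoint_left.1 (hF hψ).2 hxψ ⟨hxφ, hx⟩
  exact hn (models_iff_world.2 fun N hN => models_iff_world.1 hF' N fun ψ hψ => hN ψ (hF'T hψ))

theorem indep_of_uncountable {L : FirstOrder.Language.{u, v}} {T : L.Theory} (hT : Tight T)
    (hcard : ℵ₀ < #T) : HasIndep T := by
  obtain ⟨D, hD⟩ := zorn_subset
    {D : Set (Set L.Symbols) | (∀ d ∈ D, Essential T d) ∧ D.PairwiseDisjoint id} (by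
      intro c hc hchain
      refine ⟨⋃₀ c, ⟨?_, ?_⟩, fun s hs => subset_sUnion_of_mem hs⟩
      · rintro d ⟨D, hD, hd⟩
        exact (hc hD).1 d hd
      · exact (pairwiseDisjoint_sUnion hchain.directedOn).2 fun D hD => (hc hD).2)
  have hess := hD.prop.1
  have hdisj := hD.prop.2
  have hle : #T ≤ #D := by
    by_contra hlt
    rw [not_le] at hlt
    have hU : #(⋃ d ∈ D, d : Set L.Symbols) < #T :=
      (mk_biUnion_le_of_le (le_max_left ℵ₀ #D) (le_max_right _ _)
        fun d hd => (hess d hd).1.countable.le_aleph0.trans (le_max_left _ _)).trans_lt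
        (max_lt hcard hlt)
    obtain ⟨d, hd, hdU⟩ := exists_essential hT hcard hU
    have hdD : ∀ e ∈ D, Disjoint d e := fun e he =>
      hdU.mono_right (subset_biUnion_of_mem (u := fun d => d) he)
    have hmem : d ∈ D := by
      refine hD.le_of_ge (y := insert d D) ⟨?_, ?_⟩ (subset_insert d D) (mem_insert d D)
      · rintro e (rfl | he)
        · exact hd
        · exact hess e he
      · exact hdisj.insert fun e he _ => hdD e he
    obtain ⟨x, hx⟩ := hd.nonempty
    exact disjoint_left.1 (hdD d hmem) hx hx
  have : ∀ d : D, ∃ N : World L, (∀ φ ∈ avoid T d, N ⊨ φ) ∧ ∃ φ ∈ T, ¬ N ⊨ φ := by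
    rintro ⟨d, hd⟩
    obtain ⟨-, φ, hφ, h⟩ := hess d hd
    obtain ⟨N, h1, h2⟩ := exists_world_of_not_models h
    exact ⟨N, h1, φ, hφ, h2⟩
  choose N hN1 hN2 using this
  have : Infinite D := infinite_iff.2 (hcard.le.trans hle)
  refine independent_of_family N hN2 ?_ hle
  intro φ hφ
  -- A failing `φ` meets `d`; choosing a point in the intersection is injective by disjointness.
  have hmeet : ∀ d ∈ {d : D | ¬ N d ⊨ φ}, ∃ x ∈ supp φ, x ∈ (d : Set L.Symbols) := by
    intro d hd
    by_contra hcon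
    push Not at hcon
    exact hd (hN1 d φ ⟨hφ, disjoint_left.2 hcon⟩)
  have : Nonempty L.Symbols := let ⟨i⟩ := (inferInstance : Nonempty D)
    ((hess i.1 i.2).nonempty).to_type
  choose! p hp1 hp2 using hmeet
  refine Finite.of_finite_image ((supp_finite φ).subset (image_subset_iff.2 hp1)) ?_
  intro d hd e he hde
  by_contra hne
  refine disjoint_left.1 (hdisj d.2 e.2 fun h => hne (Subtype.ext h)) (hp2 d hd) ?_
  rw [hde]
  exact hp2 e he

theorem hasIndep {L : FirstOrder.Language.{u, v}} (T : L.Theory) : HasIndep T := by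
  obtain ⟨T₁, h1, hT₁⟩ := exists_tight T
  have : HasIndep T₁ := by
    rcases lt_trichotomy #T₁ ℵ₀ with h | h | h
    · exact indep_of_finite hT₁ (lt_aleph0_iff_set_finite.1 h)
    · exact indep_of_countable hT₁ h
    · exact indep_of_uncountable hT₁ h
  obtain ⟨T', h2, h3⟩ := this
  exact ⟨T', fun N => (h2 N).trans (h1 N), h3⟩

end Reznikoff

/-- Reznikoff's theorem: every first-order theory, of any cardinality, has an
independent axiomatization. -/
theorem reznikoff_independent_axiomatization {L : FirstOrder.Language.{u, v}}
    (T : Set L.Sentence) :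
    ∃ T' : Set L.Sentence,
      (∀ (M : Type (max u v)) (S : L.Structure M), Nonempty M →
        (IsModelOfSet M S T' ↔ IsModelOfSet M S T)) ∧
      IndependentTheory T' := by
  obtain ⟨T', h1, h2⟩ := Reznikoff.hasIndep T
  refine ⟨T', fun M S hM => ?_, fun φ hφ => ?_⟩
  · exact h1 (Theory.ModelType.of ∅ M)
  · obtain ⟨N, h3, h4⟩ := h2 φ hφ
    exact ⟨N, inferInstance, inferInstance, fun ψ hψ => h3 ψ hψ.1 hψ.2, h4⟩
end

section
/- Let L be a first-order language and let C and D be disjoint sets of L-sentences with the cardinality of D at most the cardinality of C. Assume that for every φ ∈ C there is an L-structure satisfying every sentence of (C ∪ D) \ {φ} but not satisfying φ. Then C ∪ D is independently axiomatizable: there is an independent set of L-sentences having exactly the same models as C ∪ D. -/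
/-!
Fix an injection `f : D → C` and replace each `c = f d` by the conjunction `c ⊓ d`, leaving the
elements of `C` outside the range of `f` unchanged. The resulting sentences `g c` (`c ∈ C`) have
jointly the models of `C ∪ D`. A model of `(C ∪ D) \ {c}` that fails `c` also fails `g c`, but it
satisfies every other `g c'`: disjointness of `C` and `D` ensures that it satisfies all of `D`.
-/

open FirstOrder Language

universe u v

/-- Each `c ∈ C` can be strengthened to a single sentence that also asserts the element of `D`
attached to it by the injection `f`, if there is one. -/
theorem exists_conj_sentence {L : FirstOrder.Language.{u, v}} {C D : Set L.Sentence}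
    (f : D ↪ C) (c : C) :
    ∃ ψ : L.Sentence, ∀ (M : Type (max u v)) (S : L.Structure M),
      @FirstOrder.Language.Sentence.Realize L M S ψ ↔
        (@FirstOrder.Language.Sentence.Realize L M S c.1 ∧
          ∀ d : D, f d = c → @FirstOrder.Language.Sentence.Realize L M S d.1) := by
  by_cases h : ∃ d, f d = c
  · obtain ⟨d, rfl⟩ := h
    refine ⟨(f d).1 ⊓ d.1, fun M S => ?_⟩
    simp only [FirstOrder.Language.Sentence.Realize, FirstOrder.Language.Formula.realize_inf,
      f.apply_eq_iff_eq, forall_eq]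
  · exact ⟨c.1, fun M S => ⟨fun hc => ⟨hc, fun d hd => (h ⟨d, hd⟩).elim⟩, And.left⟩⟩

/-- The Reznikoff-style combining lemma: if `C` and `D` are disjoint sets of sentences
with `|D| ≤ |C|`, and no sentence of `C` is a semantic consequence of the remaining
sentences of `C ∪ D`, then `C ∪ D` is independently axiomatizable. -/
theorem combining_lemma {L : FirstOrder.Language.{u, v}}
    (C D : Set L.Sentence) (hdisj : Disjoint C D)
    (hcard : Cardinal.mk D ≤ Cardinal.mk C)
    (hC : ∀ φ ∈ C, ∃ (M : Type (max u v)) (S : L.Structure M), Nonempty M ∧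
      IsModelOfSet M S ((C ∪ D) \ {φ}) ∧ ¬ @FirstOrder.Language.Sentence.Realize L M S φ) :
    ∃ T' : Set L.Sentence,
      (∀ (M : Type (max u v)) (S : L.Structure M), Nonempty M →
        (IsModelOfSet M S T' ↔ IsModelOfSet M S (C ∪ D))) ∧
      IndependentTheory T' := by
  obtain ⟨f⟩ : Nonempty (D ↪ C) := hcard
  choose g hg using exists_conj_sentence f
  refine ⟨Set.range g, fun M S _ => ⟨?_, ?_⟩, ?_⟩
  · rintro h φ (hφ | hφ)
    · exact ((hg ⟨φ, hφ⟩ M S).1 (h _ ⟨_, rfl⟩)).1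
    · exact ((hg (f ⟨φ, hφ⟩) M S).1 (h _ ⟨_, rfl⟩)).2 ⟨φ, hφ⟩ rfl
  · rintro h _ ⟨c, rfl⟩
    exact (hg c M S).2 ⟨h _ (Or.inl c.2), fun d _ => h _ (Or.inr d.2)⟩
  · rintro _ ⟨c, rfl⟩
    obtain ⟨M, S, hM, hmod, hnot⟩ := hC c.1 c.2
    refine ⟨M, S, hM, ?_, fun h => hnot ((hg c M S).1 h).1⟩
    rintro _ ⟨⟨c', rfl⟩, hne⟩
    refine (hg c' M S).2 ⟨hmod _ ⟨Or.inl c'.2, fun h => hne ?_⟩,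
      fun d _ => hmod _ ⟨Or.inr d.2, fun h => ?_⟩⟩
    · exact congrArg g (Subtype.ext h)
    · exact Set.disjoint_left.1 hdisj c.2 (Set.mem_singleton_iff.1 h ▸ d.2)
end

section
/- Let L be a first-order language, let C and D be disjoint sets of L-sentences, and let f : D → C be an injective function. Assume that for every φ ∈ C there is an L-structure satisfying every sentence of (C ∪ D) \ {φ} but not satisfying φ. Then the set T' := (C \ f(D)) ∪ { ψ ∧ f(ψ) : ψ ∈ D } (where ψ ∧ f(ψ) denotes the conjunction of the two sentences) is independent and has exactly the same models as C ∪ D. -/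
/-!
Every `φ ∈ C` is associated with one element of `T' = (C \ f(D)) ∪ {ψ ⊓ f ψ : ψ ∈ D}`: the
sentence `φ` itself if `φ ∉ f(D)`, and `ψ ⊓ f ψ` if `φ = f ψ`. Since `f` is injective, and no
sentence of `D` equals `φ` because `C` and `D` are disjoint, every other element of `T'` is built
only from sentences of `C ∪ D` different from `φ`. Hence the model of `(C ∪ D) \ {φ}` refuting `φ`
satisfies the rest of `T'` and refutes the element associated with `φ`. Every element of `T'`
arises in this way, so `T'` is independent. That `T'` and `C ∪ D` have the same models is immediate
from the semantics of conjunction.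
-/

open FirstOrder Language

universe u v

theorem realize_sentence_inf {L : FirstOrder.Language.{u, v}} {M : Type (max u v)}
    (S : L.Structure M) (φ ψ : L.Sentence) :
    @FirstOrder.Language.Sentence.Realize L M S (φ ⊓ ψ) ↔
      @FirstOrder.Language.Sentence.Realize L M S φ ∧
        @FirstOrder.Language.Sentence.Realize L M S ψ :=
  FirstOrder.Language.Formula.realize_inf

/-- The explicit construction in the Reznikoff-style combining lemma: given disjoint
sets of sentences `C`, `D`, an injection `f : D → C`, and the hypothesis that no
sentence of `C` follows from the remaining sentences of `C ∪ D`, the set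
`(C \ f(D)) ∪ { ψ ⊓ f(ψ) : ψ ∈ D }` is independent and has the same models as `C ∪ D`. -/
theorem combining_lemma_construction {L : FirstOrder.Language.{u, v}}
    (C D : Set L.Sentence) (hdisj : Disjoint C D)
    (f : D → C) (hf : Function.Injective f)
    (hC : ∀ φ ∈ C, ∃ (M : Type (max u v)) (S : L.Structure M), Nonempty M ∧
      IsModelOfSet M S ((C ∪ D) \ {φ}) ∧ ¬ @FirstOrder.Language.Sentence.Realize L M S φ) :
    IndependentTheory
      ((C \ Set.range fun ψ : D => (f ψ : L.Sentence)) ∪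
        Set.range fun ψ : D => (ψ : L.Sentence) ⊓ (f ψ : L.Sentence)) ∧
    (∀ (M : Type (max u v)) (S : L.Structure M), Nonempty M →
      (IsModelOfSet M S
        ((C \ Set.range fun ψ : D => (f ψ : L.Sentence)) ∪
          Set.range fun ψ : D => (ψ : L.Sentence) ⊓ (f ψ : L.Sentence)) ↔
       IsModelOfSet M S (C ∪ D))) := by
  have hne : ∀ φ ∈ C, ∀ ψ : D, (ψ : L.Sentence) ≠ φ := fun φ hφ ψ h =>
    Set.disjoint_left.mp hdisj hφ (h ▸ ψ.2)
  refine ⟨?_, ?_⟩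
  · rintro φ (⟨hφC, hφf⟩ | ⟨ψ, rfl⟩)
    · obtain ⟨M, S, hM, hmod, hnot⟩ := hC φ hφC
      refine ⟨M, S, hM, ?_, hnot⟩
      rintro χ ⟨⟨hχC, -⟩ | ⟨ψ, rfl⟩, hχ⟩
      · exact hmod χ ⟨Or.inl hχC, hχ⟩
      · exact (realize_sentence_inf S _ _).mpr
          ⟨hmod _ ⟨Or.inr ψ.2, hne φ hφC ψ⟩,
            hmod _ ⟨Or.inl (f ψ).2, fun h => hφf ⟨ψ, h⟩⟩⟩
    · obtain ⟨M, S, hM, hmod, hnot⟩ := hC (f ψ) (f ψ).2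
      refine ⟨M, S, hM, ?_, fun h => hnot ((realize_sentence_inf S _ _).mp h).2⟩
      rintro χ ⟨⟨hχC, hχf⟩ | ⟨θ, rfl⟩, hχ⟩
      · exact hmod χ ⟨Or.inl hχC, fun h => hχf ⟨ψ, h.symm⟩⟩
      · refine (realize_sentence_inf S _ _).mpr
          ⟨hmod _ ⟨Or.inr θ.2, hne _ (f ψ).2 θ⟩, hmod _ ⟨Or.inl (f θ).2, fun h => hχ ?_⟩⟩
        -- If `f θ = f ψ` then `θ = ψ`, so the two conjunctions would be the same sentence.
        obtain rfl : θ = ψ := hf (Subtype.ext h)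
        rfl
  · intro M S _
    constructor
    · intro h
      have hD : ∀ ψ : D, _ := fun ψ =>
        (realize_sentence_inf S _ _).mp (h _ (Or.inr ⟨ψ, rfl⟩))
      rintro φ (hφ | hφ)
      · by_cases hφf : φ ∈ Set.range fun ψ : D => (f ψ : L.Sentence)
        · obtain ⟨ψ, rfl⟩ := hφf
          exact (hD ψ).2
        · exact h φ (Or.inl ⟨hφ, hφf⟩)
      · exact (hD ⟨φ, hφ⟩).1
    · rintro h φ (⟨hφ, -⟩ | ⟨ψ, rfl⟩)
      · exact h φ (Or.inl hφ)
      · exact (realize_sentence_inf S _ _).mpr ⟨h _ (Or.inr ψ.2), h _ (Or.inl (f ψ).2)⟩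
end

section
/- Let L be a first-order language, let ι be an index type with a distinguished element i₀, let (φ_α)_{α ∈ ι} be a family of L-sentences, and let (ψ_α)_{α ∈ ι, α ≠ i₀} be a family of L-sentences that partitions ¬φ_{i₀}, i.e.: each ψ_α has a model; every L-structure satisfies ¬φ_{i₀} if and only if it satisfies ψ_α for some α ≠ i₀; and every structure satisfying ψ_α satisfies ¬ψ_β for all β ≠ α (β ≠ i₀). For each α ≠ i₀ define the sentence φ̄_α := ¬ψ_α ∧ (¬φ_{i₀} ∨ φ_α). Then the set T' = { φ̄_α : α ≠ i₀ } is independent: for every α ≠ i₀ there is an L-structure satisfying φ̄_β for all β ≠ α (β ≠ i₀) but not satisfying φ̄_α. -/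
open FirstOrder Language

universe u v

/-- The sentence `φ̄_α := ¬ψ_α ∧ (¬φ_{i₀} ∨ φ_α)` from the paper's partition lemma. -/
def phiBar {L : FirstOrder.Language.{u, v}} {ι : Type*} {i₀ : ι}
    (φ : ι → L.Sentence) (ψ : {α : ι // α ≠ i₀} → L.Sentence)
    (α : {α : ι // α ≠ i₀}) : L.Sentence :=
  ∼(ψ α) ⊓ (∼(φ i₀) ⊔ φ α.val)

theorem realize_phiBar {L : FirstOrder.Language.{u, v}} {ι : Type*} {i₀ : ι}
    (φ : ι → L.Sentence) (ψ : {α : ι // α ≠ i₀} → L.Sentence) (α : {α : ι // α ≠ i₀})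
    (M : Type*) [L.Structure M] :
    FirstOrder.Language.Sentence.Realize M (phiBar φ ψ α) ↔
      ¬ FirstOrder.Language.Sentence.Realize M (ψ α) ∧
        (¬ FirstOrder.Language.Sentence.Realize M (φ i₀) ∨
          FirstOrder.Language.Sentence.Realize M (φ α.val)) := by
  simp [phiBar, FirstOrder.Language.Sentence.Realize]

/-- If the sentences `ψ_α` (for `α ≠ i₀`) partition `¬φ_{i₀}`, then the set of
sentences `φ̄_α = ¬ψ_α ∧ (¬φ_{i₀} ∨ φ_α)` (for `α ≠ i₀`) is independent: for each
`α ≠ i₀` some structure satisfies all `φ̄_β` for `β ≠ α` but not `φ̄_α`. -/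
theorem partition_replacement_independent {L : FirstOrder.Language.{u, v}} {ι : Type*}
    (i₀ : ι) (φ : ι → L.Sentence) (ψ : {α : ι // α ≠ i₀} → L.Sentence)
    (hcons : ∀ α : {α : ι // α ≠ i₀}, ∃ (M : Type (max u v)) (S : L.Structure M),
      Nonempty M ∧ @FirstOrder.Language.Sentence.Realize L M S (ψ α))
    (hcover : ∀ (M : Type (max u v)) (S : L.Structure M), Nonempty M →
      (¬ @FirstOrder.Language.Sentence.Realize L M S (φ i₀) ↔
        ∃ α : {α : ι // α ≠ i₀}, @FirstOrder.Language.Sentence.Realize L M S (ψ α)))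
    (hdisj : ∀ (M : Type (max u v)) (S : L.Structure M), Nonempty M →
      ∀ α : {α : ι // α ≠ i₀}, @FirstOrder.Language.Sentence.Realize L M S (ψ α) →
        ∀ β : {α : ι // α ≠ i₀}, β ≠ α →
          ¬ @FirstOrder.Language.Sentence.Realize L M S (ψ β)) :
    ∀ α : {α : ι // α ≠ i₀}, ∃ (M : Type (max u v)) (S : L.Structure M), Nonempty M ∧
      (∀ β : {α : ι // α ≠ i₀}, β ≠ α →
        @FirstOrder.Language.Sentence.Realize L M S (phiBar φ ψ β)) ∧
      ¬ @FirstOrder.Language.Sentence.Realize L M S (phiBar φ ψ α) := by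
  intro α
  -- Any model of `ψ α` separates `φ̄_α` from the rest: it fails `ψ β` for `β ≠ α` by
  -- disjointness, and it fails `φ i₀` by covering.
  obtain ⟨M, S, hM, hα⟩ := hcons α
  refine ⟨M, S, hM, fun β hβ => ?_, fun h => ?_⟩
  · exact (realize_phiBar φ ψ β M).2
      ⟨hdisj M S hM α hα β hβ, Or.inl ((hcover M S hM).2 ⟨α, hα⟩)⟩
  · exact ((realize_phiBar φ ψ α M).1 h).1 hα
end

section
/- Let X be a set, let ι be an index set, let (B_i)_{i ∈ ι} be a family of subsets of X with ⋂_{i ∈ ι} B_i ≠ ∅, let i₀ ∈ ι, and let (C_j)_{j ∈ ι, j ≠ i₀} be a family of pairwise disjoint nonempty subsets of X whose union is the complement of B_{i₀}. For each j ≠ i₀ define B'_j := (X \ C_j) ∩ ((X \ B_{i₀}) ∪ B_j). Then the family (B'_j)_{j ≠ i₀} is independent: ⋂_{j ≠ i₀} B'_j ≠ ∅, and for every j ≠ i₀, (⋂_{j' ≠ i₀, j' ≠ j} B'_{j'}) \ B'_j ≠ ∅. -/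
/-- Case I independence claim: if the original family has nonempty intersection and the
sets `C_j` (for `j ≠ i₀`) are pairwise disjoint, nonempty, and partition the complement
of `B_{i₀}`, then the family `B'_j := C_jᶜ ∩ (B_{i₀}ᶜ ∪ B_j)` is independent. -/
theorem caseI_independent {X : Type*} {ι : Type*} (B : ι → Set X) (i₀ : ι)
    (hne : (⋂ i, B i).Nonempty)
    (C : {j : ι // j ≠ i₀} → Set X)
    (hdisj : Pairwise (Function.onFun Disjoint C))
    (hCne : ∀ j, (C j).Nonempty)
    (hC : (⋃ j, C j) = (B i₀)ᶜ) :
    (⋂ j : {j : ι // j ≠ i₀}, ((C j)ᶜ ∩ ((B i₀)ᶜ ∪ B j.val))).Nonempty ∧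
    ∀ j : {j : ι // j ≠ i₀},
      ((⋂ (j' : {j : ι // j ≠ i₀}) (_ : j' ≠ j), ((C j')ᶜ ∩ ((B i₀)ᶜ ∪ B j'.val))) \
        ((C j)ᶜ ∩ ((B i₀)ᶜ ∪ B j.val))).Nonempty := by
  have hsub : ∀ j, C j ⊆ (B i₀)ᶜ := fun j => hC ▸ Set.subset_iUnion C j
  constructor
  -- A common point of the `B i` lies in `B i₀`, hence in no `C j`.
  · obtain ⟨x, hx⟩ := hne
    rw [Set.mem_iInter] at hx
    exact ⟨x, Set.mem_iInter.2 fun j => ⟨fun h => hsub j h (hx i₀), Or.inr (hx j.val)⟩⟩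
  -- A point of `C j` lies outside `B i₀` and, by disjointness, outside every other `C j'`.
  · intro j
    obtain ⟨x, hx⟩ := hCne j
    refine ⟨x, Set.mem_iInter₂.2 fun j' hj' => ⟨fun h => ?_, Or.inl (hsub j hx)⟩, fun h => h.1 hx⟩
    exact Set.disjoint_left.1 (hdisj hj') h hx
end

section
/- Let X be a Polish space, let ι be an index set of cardinality at most the continuum 2^{ℵ₀}, and let (B_i)_{i ∈ ι} be a family of Borel subsets of X with ⋂_{i ∈ ι} B_i ≠ ∅. Assume there exists i₀ ∈ ι such that the complement of B_{i₀} is uncountable. Then there exists an index set ι' and an independent family (B'_j)_{j ∈ ι'} of Borel subsets of X with ⋂_{j ∈ ι'} B'_j = ⋂_{i ∈ ι} B_i. -/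
/-!
Let `C` be the complement of `B i₀`. It is an uncountable standard Borel space, hence in
bijection `e` with the Cantor space, so points of `C` can be indexed by `T = ℕ → Bool`
(lifted to the universe of `ι`). As `ι` is nonempty with at most continuum many elements, there
is a surjection `h : T → ι`. Put `B' t = {e t}ᶜ ∩ (B (h t) ∪ C)`. Removing all the points `e t`
removes exactly `C`, and outside `C` the intersection runs over all `B i`; so the intersection
is unchanged. The point `e t` lies in `C` and differs from every other `e s`, so it lies in each
`B' s` with `s ≠ t` but not in `B' t`.
-/

universe u v

/-- Case I of the Borel-set theorem: if a family of at most continuum many Borel subsets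
of a Polish space has nonempty intersection and some member has uncountable complement,
then the family admits an equivalent independent family of Borel sets. -/
theorem borel_independent_family_caseI {X : Type v} [TopologicalSpace X] [PolishSpace X]
    [MeasurableSpace X] [BorelSpace X] {ι : Type u}
    (B : ι → Set X) (hBorel : ∀ i, MeasurableSet (B i))
    (hcard : Cardinal.mk ι ≤ 2 ^ Cardinal.aleph0)
    (hne : (⋂ i, B i).Nonempty)
    (huncount : ∃ i₀ : ι, ¬ ((B i₀)ᶜ).Countable) :
    ∃ (ι' : Type u) (B' : ι' → Set X),
      (∀ j, MeasurableSet (B' j)) ∧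
      (⋂ j, B' j) = (⋂ i, B i) ∧
      (⋂ j, B' j).Nonempty ∧
      ∀ j : ι', ((⋂ (j' : ι') (_ : j' ≠ j), B' j') \ B' j).Nonempty := by
  obtain ⟨i₀, hi₀⟩ := huncount
  have hC : MeasurableSet (B i₀)ᶜ := (hBorel i₀).compl
  have : StandardBorelSpace ↥(B i₀)ᶜ := hC.standardBorel
  have e : ULift.{u} (ℕ → Bool) ≃ ↥(B i₀)ᶜ :=
    Equiv.ulift.trans
      (PolishSpace.measurableEquivNatBoolOfNotCountable (α := ↥(B i₀)ᶜ) hi₀).toEquiv.symm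
  have hle : Cardinal.mk ι ≤ Cardinal.mk (ULift.{u} (ℕ → Bool)) := by
    simpa using hcard
  obtain ⟨g⟩ := hle
  have : Nonempty ι := ⟨i₀⟩
  obtain ⟨h, hh⟩ : ∃ h : ULift.{u} (ℕ → Bool) → ι, Function.Surjective h :=
    ⟨_, Function.invFun_surjective g.injective⟩
  have hInter : (⋂ t, ({(e t : X)}ᶜ ∩ (B (h t) ∪ (B i₀)ᶜ))) = ⋂ i, B i := by
    ext x
    simp only [Set.mem_iInter, Set.mem_inter_iff, Set.mem_union, Set.mem_compl_iff,
      Set.mem_singleton_iff]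
    constructor
    · intro hx
      have hx₀ : x ∈ B i₀ := by
        by_contra hn
        exact (hx (e.symm ⟨x, hn⟩)).1 (by simp)
      intro i
      obtain ⟨t, rfl⟩ := hh i
      exact (hx t).2.resolve_right (fun hn => hn hx₀)
    · intro hx t
      exact ⟨fun hxt => (e t).2 (hxt ▸ hx i₀), Or.inl (hx _)⟩
  refine ⟨ULift.{u} (ℕ → Bool), fun t => {(e t : X)}ᶜ ∩ (B (h t) ∪ (B i₀)ᶜ), ?_, hInter,
    hInter ▸ hne, ?_⟩
  · intro t
    exact (MeasurableSet.singleton _).compl.inter ((hBorel _).union hC)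
  · intro t
    refine ⟨e t, ?_, fun ht => ht.1 rfl⟩
    simp only [Set.mem_iInter]
    intro s hs
    exact ⟨fun hts => hs (e.injective (Subtype.ext hts)).symm, Or.inr (e t).2⟩
end

section
/- Let X be a set, let ι be a linearly ordered index type whose order is a well-order, and let (B_i)_{i ∈ ι} be a family of subsets of X. For each j ∈ ι define B'_j := B_j ∪ ⋃_{i < j} (X \ B_i). Then for every j ∈ ι with B'_j ≠ X, we have (⋂_{i ∈ ι, i ≠ j} B'_i) \ B'_j ≠ ∅. Consequently, if moreover ⋂_{i ∈ ι} B_i ≠ ∅, the subfamily (B'_j)_{j ∈ ι, B'_j ≠ X} is independent. -/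
/-- The Case II enlargement: `B'_j := B_j ∪ ⋃_{i < j} (B_i)ᶜ`. -/
def enlarged {X : Type*} {ι : Type*} [LinearOrder ι] (B : ι → Set X) (j : ι) : Set X :=
  B j ∪ ⋃ i < j, (B i)ᶜ

/-- Case II independence claim: with `B'_j := B_j ∪ ⋃_{i < j} (B_i)ᶜ` along a well-order,
every `B'_j` that is a proper subset of `X` is not covered by the other `B'_i`; hence if
the original family has nonempty intersection, the subfamily of proper `B'_j` is
independent. -/
theorem caseII_independent {X : Type*} {ι : Type*} [LinearOrder ι] [WellFoundedLT ι]
    (B : ι → Set X) :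
    (∀ j : ι, enlarged B j ≠ Set.univ →
      ((⋂ (i : ι) (_ : i ≠ j), enlarged B i) \ enlarged B j).Nonempty) ∧
    ((⋂ i, B i).Nonempty →
      ((⋂ j : {j : ι // enlarged B j ≠ Set.univ}, enlarged B j.val).Nonempty ∧
        ∀ j : {j : ι // enlarged B j ≠ Set.univ},
          ((⋂ (j' : {j : ι // enlarged B j ≠ Set.univ}) (_ : j' ≠ j),
              enlarged B j'.val) \ enlarged B j.val).Nonempty)) := by
  have key : ∀ j y, y ∉ enlarged B j → ∀ i, i ≠ j → y ∈ enlarged B i := by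
    intro j y hy i hij
    simp only [enlarged, Set.mem_union, Set.mem_iUnion, Set.mem_compl_iff, not_or, not_exists,
      not_not] at hy ⊢
    -- A point outside `B'_j` lies in `B i` for `i < j`, and in `(B j)ᶜ`, a piece of `B'_i`,
    -- for `j < i`.
    rcases lt_or_gt_of_ne hij with h | h
    · exact Or.inl (hy.2 i h)
    · exact Or.inr ⟨j, h, hy.1⟩
  refine ⟨fun j hj => ?_, fun ⟨x, hx⟩ => ⟨⟨x, ?_⟩, fun j => ?_⟩⟩
  · obtain ⟨y, hy⟩ := (Set.ne_univ_iff_exists_notMem _).1 hj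
    exact ⟨y, Set.mem_iInter₂.2 (key j y hy), hy⟩
  · exact Set.mem_iInter.2 fun j => Or.inl (Set.mem_iInter.1 hx j.val)
  · obtain ⟨y, hy⟩ := (Set.ne_univ_iff_exists_notMem _).1 j.2
    exact ⟨y, Set.mem_iInter₂.2 fun i hi => key j y hy i (Subtype.coe_injective.ne hi), hy⟩
end

section
/- Let X be a Polish space and let (B_i)_{i ∈ ι} be a family of Borel subsets of X with ⋂_{i ∈ ι} B_i ≠ ∅, such that for every i ∈ ι the complement X \ B_i is countable. Then there exists an index set ι' and an independent family (B'_j)_{j ∈ ι'} of Borel subsets of X with ⋂_{j ∈ ι'} B'_j = ⋂_{i ∈ ι} B_i. -/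
/-!
Well-order the index set and let `firstMiss B i` be the set of points whose least index of a member
of `B` missing them is `i`. These sets are pairwise disjoint, each is countable (being contained in
`(B i)ᶜ`), and their union is the union of the `(B i)ᶜ`. Hence the complements of the nonempty ones
are Borel, have the same intersection as `B`, and form an independent family: a point of
`firstMiss B i` lies in the complement of every `firstMiss B j` with `j ≠ i`.
-/


universe u v

/-- The points outside `B i` that lie in every `B j` with `j` strictly before `i` in a fixed
well-order of the index type; equivalently, the complement of `B i ∪ ⋃ j < i, (B j)ᶜ`. -/
def firstMiss {X : Type v} {ι : Type u} (B : ι → Set X) (i : ι) : Set X :=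
  {x | x ∉ B i ∧ ∀ j, WellOrderingRel j i → x ∈ B j}

theorem exists_mem_firstMiss {X : Type v} {ι : Type u} {B : ι → Set X} {i : ι} {x : X}
    (hx : x ∉ B i) : ∃ j, x ∈ firstMiss B j := by
  obtain ⟨j, hj, hmin⟩ :=
    (WellOrderingRel.isWellOrder (α := ι)).wf.has_min {j | x ∉ B j} ⟨i, hx⟩
  exact ⟨j, hj, fun k hk => by_contra fun hkx => hmin k hkx hk⟩

theorem firstMiss_index_unique {X : Type v} {ι : Type u} {B : ι → Set X} {i j : ι} {x : X}
    (hi : x ∈ firstMiss B i) (hj : x ∈ firstMiss B j) : i = j := by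
  rcases trichotomous_of WellOrderingRel i j with h | h | h
  · exact absurd (hj.2 i h) hi.1
  · exact h
  · exact absurd (hi.2 j h) hj.1

/-- Case II of the Borel-set theorem: if each member of a family of Borel subsets of a
Polish space has countable complement and the family has nonempty intersection, then it
admits an equivalent independent family of Borel sets. -/
theorem borel_independent_family_caseII {X : Type v} [TopologicalSpace X] [PolishSpace X]
    [MeasurableSpace X] [BorelSpace X] {ι : Type u}
    (B : ι → Set X) (hBorel : ∀ i, MeasurableSet (B i))
    (hne : (⋂ i, B i).Nonempty)
    (hcount : ∀ i, ((B i)ᶜ).Countable) :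
    ∃ (ι' : Type u) (B' : ι' → Set X),
      (∀ j, MeasurableSet (B' j)) ∧
      (⋂ j, B' j) = (⋂ i, B i) ∧
      (⋂ j, B' j).Nonempty ∧
      ∀ j : ι', ((⋂ (j' : ι') (_ : j' ≠ j), B' j') \ B' j).Nonempty := by
  have hinter : (⋂ j : {i // (firstMiss B i).Nonempty}, (firstMiss B j.1)ᶜ) = ⋂ i, B i := by
    ext x
    simp only [Set.mem_iInter, Set.mem_compl_iff]
    constructor
    · intro h i
      by_contra hx
      obtain ⟨j, hj⟩ := exists_mem_firstMiss hx
      exact h ⟨j, x, hj⟩ hj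
    · intro h j hj
      exact hj.1 (h j.1)
  refine ⟨{i // (firstMiss B i).Nonempty}, fun j => (firstMiss B j.1)ᶜ, fun j => ?_, hinter,
    hinter ▸ hne, ?_⟩
  · exact ((hcount j.1).mono fun x hx => hx.1).measurableSet.compl
  · rintro ⟨j, x, hx⟩
    refine ⟨x, ?_, fun h => h hx⟩
    simp only [Set.mem_iInter]
    intro k hk hxk
    exact hk (Subtype.ext (firstMiss_index_unique hxk hx))
end

section
/- Let X be a set and let (B_i)_{i ∈ ι} be any family of subsets of X with ⋂_{i ∈ ι} B_i ≠ ∅. Then there exists an index set ι' and a family (B'_j)_{j ∈ ι'} of subsets of X that is independent (⋂_{j ∈ ι'} B'_j ≠ ∅ and for every j ∈ ι', (⋂_{j' ≠ j} B'_{j'}) \ B'_j ≠ ∅) and satisfies ⋂_{j ∈ ι'} B'_j = ⋂_{i ∈ ι} B_i. -/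
/-!
Well-order the index set and let `B' j` be the set of points for which `j` is not the first index
`i` with `x ∉ B i`. A point outside `⋂ i, B i` has exactly one first such index, so it lies outside
exactly one `B' j`, while a point of `⋂ i, B i` lies in every `B' j`. Thus the `B' j` have the same
intersection as the `B i`, their complements are pairwise disjoint, and after discarding the
`B' j` equal to the whole space any point outside `B' j` witnesses independence at `j`.
-/

universe u v

/-- The purely set-theoretic version: every family of subsets of a set `X` with nonempty
intersection admits an equivalent independent family of subsets of `X`. -/
theorem independent_family_of_sets {X : Type v} {ι : Type u}
    (B : ι → Set X) (hne : (⋂ i, B i).Nonempty) :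
    ∃ (ι' : Type u) (B' : ι' → Set X),
      ((⋂ j, B' j).Nonempty ∧
        ∀ j : ι', ((⋂ (j' : ι') (_ : j' ≠ j), B' j') \ B' j).Nonempty) ∧
      (⋂ j, B' j) = ⋂ i, B i := by
  classical
  let r : ι → ι → Prop := WellOrderingRel
  have wf : WellFounded r := IsWellFounded.wf
  let C : ι → Set X := fun j => {x | x ∈ B j ∨ ∃ i, r i j ∧ x ∉ B i}
  have hC : (⋂ j : {j // C j ≠ Set.univ}, C j) = ⋂ i, B i := by
    ext x
    simp only [Set.mem_iInter]
    constructor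
    · intro h
      have hall : ∀ j, x ∈ C j := fun j => by
        by_cases hj : C j = Set.univ
        · rw [hj]; trivial
        · exact h ⟨j, hj⟩
      intro i
      induction i using wf.induction with
      | _ i ih =>
        rcases hall i with hi | ⟨k, hk, hxk⟩
        · exact hi
        · exact absurd (ih k hk) hxk
    · exact fun h j => Or.inl (h j)
  refine ⟨{j // C j ≠ Set.univ}, fun j => C j, ⟨hC ▸ hne, ?_⟩, hC⟩
  rintro ⟨j, hj⟩
  obtain ⟨x, hx⟩ := (Set.ne_univ_iff_exists_notMem _).1 hj
  refine ⟨x, ?_, hx⟩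
  have hxj : x ∉ B j := fun h => hx (Or.inl h)
  have hlt : ∀ i, r i j → x ∈ B i := fun i hi => by
    by_contra h
    exact hx (Or.inr ⟨i, hi, h⟩)
  simp only [Set.mem_iInter]
  rintro ⟨k, hk⟩ hkj
  rcases trichotomous_of r k j with h | h | h
  · exact Or.inl (hlt k h)
  · exact absurd (Subtype.ext h) hkj
  · exact Or.inr ⟨j, h, hxj⟩
end
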